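/- Let a, b, x, t be complex numbers with b not a nonpositive integer. Then the generating relation obtained from the one-parameter subgroup raising the parameter b holds: e^{−t} ₁F₁(a;b; x + t) = Σ_{ℓ=0}^∞ ((b−a)_ℓ / (ℓ! (b)_ℓ)) ₁F₁(a; b+ℓ; x) (−t)^ℓ, the series converging for all t ∈ ℂ. -/

import Mathlib

open Complex

/-- Pochhammer symbol `(q)_n = q (q+1) ⋯ (q+n-1)`. -/
noncomputable def poch (q : ℂ) (n : ℕ) : ℂ := (ascPochhammer ℂ n).eval q

/-- Confluent hypergeometric function `₁F₁(a; b; x) = ∑ₛ (a)ₛ xˢ / (s! (b)ₛ)`. -/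
noncomputable def oneF1 (a b x : ℂ) : ℂ :=
  ∑' s : ℕ, poch a s * x ^ s / ((s.factorial : ℂ) * poch b s)

open Filter Topology

lemma poch_zero (q : ℂ) : poch q 0 = 1 := by simp [poch]

lemma poch_succ (q : ℂ) (n : ℕ) : poch q (n + 1) = poch q n * (q + n) :=
  ascPochhammer_succ_eval n q

lemma poch_succ_left (q : ℂ) (n : ℕ) : poch q (n + 1) = q * poch (q + 1) n := by
  simp [poch, ascPochhammer_succ_left, Polynomial.eval_comp]

lemma poch_ne_zero {b : ℂ} (hb : ∀ n : ℕ, b ≠ -(n : ℂ)) (n : ℕ) : poch b n ≠ 0 := by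
  induction n with
  | zero => simp [poch_zero]
  | succ n ih =>
    rw [poch_succ]
    exact mul_ne_zero ih fun h => hb n (eq_neg_of_add_eq_zero_left h)

lemma add_natCast_ne_neg_natCast {b : ℂ} (hb : ∀ n : ℕ, b ≠ -(n : ℂ)) (m n : ℕ) :
    b + m ≠ -(n : ℂ) := by
  intro h
  apply hb (m + n)
  push_cast
  linear_combination h

lemma summable_oneF1 {b : ℂ} (hb : ∀ n : ℕ, b ≠ -(n : ℂ)) (a x : ℂ) :
    Summable fun s : ℕ => poch a s * x ^ s / ((s.factorial : ℂ) * poch b s) := by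
  have hlim : Tendsto (fun s : ℕ => (a + 1 * s) / (b + 1 * s) * (1 / ((s : ℂ) + 1)) * x)
      atTop (𝓝 (1 / 1 * 0 * x)) :=
    ((tendsto_add_mul_div_add_mul_atTop_nhds a b 1 one_ne_zero).mul
      tendsto_one_div_add_atTop_nhds_zero_nat).mul_const x
  have hnorm := hlim.norm
  simp only [mul_zero, zero_mul, norm_zero] at hnorm
  refine summable_of_ratio_norm_eventually_le (r := 1 / 2) (by norm_num) ?_
  filter_upwards [hnorm.eventually_le_const (by norm_num : (0 : ℝ) < 1 / 2)] with s hs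
  refine le_trans (le_of_eq ?_) (mul_le_mul_of_nonneg_right hs (norm_nonneg _))
  rw [← norm_mul]
  congr 1
  have h₁ : b + s ≠ 0 := fun h => hb s (eq_neg_of_add_eq_zero_left h)
  have h₂ := poch_ne_zero hb s
  have h₃ : (s : ℂ) + 1 ≠ 0 := Nat.cast_add_one_ne_zero s
  have h₄ : (s.factorial : ℂ) ≠ 0 := Nat.cast_ne_zero.2 s.factorial_ne_zero
  rw [poch_succ, poch_succ, Nat.factorial_succ]
  push_cast
  rw [one_mul]
  field_simp
  ring

/-- The termwise form of `₁F₁'(a; b; x) = ₁F₁(a; b; x) - (b - a) / b * ₁F₁(a; b + 1; x)`. -/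
lemma deriv_term_succ {b : ℂ} (hb : ∀ n : ℕ, b ≠ -(n : ℂ)) (a x : ℂ) (s : ℕ) :
    poch a (s + 1) * (((s + 1 : ℕ) : ℂ) * x ^ (s + 1 - 1)) /
        (((s + 1).factorial : ℂ) * poch b (s + 1)) =
      poch a s * x ^ s / ((s.factorial : ℂ) * poch b s) -
        (b - a) / b * (poch a s * x ^ s / ((s.factorial : ℂ) * poch (b + 1) s)) := by
  have h₀ : b ≠ 0 := by simpa using hb 0
  have h₁ : b + s ≠ 0 := fun h => hb s (eq_neg_of_add_eq_zero_left h)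
  have h₂ := poch_ne_zero hb s
  have h₃ : (s : ℂ) + 1 ≠ 0 := Nat.cast_add_one_ne_zero s
  have h₄ : (s.factorial : ℂ) ≠ 0 := Nat.cast_ne_zero.2 s.factorial_ne_zero
  have h₅ : poch (b + 1) s = poch b s * (b + s) / b := by
    rw [← poch_succ, poch_succ_left]
    field_simp
  rw [h₅, poch_succ, poch_succ, Nat.factorial_succ, Nat.add_sub_cancel]
  push_cast
  field_simp
  ring

lemma hasDerivAt_oneF1 {b : ℂ} (hb : ∀ n : ℕ, b ≠ -(n : ℂ)) (a x : ℂ) :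
    HasDerivAt (oneF1 a b) (oneF1 a b x - (b - a) / b * oneF1 a (b + 1) x) x := by
  have hb' : ∀ n : ℕ, b + 1 ≠ -(n : ℂ) := by simpa using add_natCast_ne_neg_natCast hb 1
  have hsum (y : ℂ) : Summable fun s : ℕ =>
      poch a s * ((s : ℂ) * y ^ (s - 1)) / ((s.factorial : ℂ) * poch b s) := by
    rw [← summable_nat_add_iff 1]
    simpa only [deriv_term_succ hb] using
      (summable_oneF1 hb a y).sub ((summable_oneF1 hb' a y).mul_left ((b - a) / b))
  set R : ℝ := ‖x‖ + 1
  have hR : 0 < R := by positivity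
  have hderiv := hasDerivAt_tsum_of_isPreconnected (t := Metric.ball (0 : ℂ) R) (y := x)
    (g := fun (s : ℕ) (y : ℂ) => poch a s * y ^ s / ((s.factorial : ℂ) * poch b s))
    (hsum (R : ℂ)).norm
    Metric.isOpen_ball (convex_ball (0 : ℂ) R).isPreconnected
    (fun s y _ => ((hasDerivAt_pow s y).const_mul (poch a s)).div_const _)
    (fun s y hy => by
      have hyR : ‖y‖ ≤ R := (mem_ball_zero_iff.1 hy).le
      simp only [norm_mul, norm_div, norm_pow, Complex.norm_real, Real.norm_of_nonneg hR.le]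
      gcongr)
    (Metric.mem_ball_self hR) (summable_oneF1 hb a 0) (by simp [R])
  refine hderiv.congr_deriv ?_
  rw [(hsum x).tsum_eq_zero_add]
  simp only [deriv_term_succ hb]
  rw [(summable_oneF1 hb a x).tsum_sub ((summable_oneF1 hb' a x).mul_left _), tsum_mul_left]
  simp [oneF1]

lemma hasDerivAt_exp_neg_mul_oneF1 {b : ℂ} (hb : ∀ n : ℕ, b ≠ -(n : ℂ)) (a x : ℂ) :
    HasDerivAt (fun y => exp (-y) * oneF1 a b y)
      (-((b - a) / b) * (exp (-x) * oneF1 a (b + 1) x)) x := by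
  refine ((hasDerivAt_neg x).cexp.mul (hasDerivAt_oneF1 hb a x)).congr_deriv ?_
  ring

lemma iteratedDeriv_exp_neg_mul_oneF1 {b : ℂ} (hb : ∀ n : ℕ, b ≠ -(n : ℂ)) (a : ℂ) (n : ℕ) :
    iteratedDeriv n (fun y => exp (-y) * oneF1 a b y) =
      fun y => (-1) ^ n * (poch (b - a) n / poch b n) * (exp (-y) * oneF1 a (b + n) y) := by
  induction n with
  | zero => simp [poch_zero]
  | succ n ih =>
    rw [iteratedDeriv_succ, ih]
    funext y
    rw [((hasDerivAt_exp_neg_mul_oneF1 (add_natCast_ne_neg_natCast hb n) a y).const_mul _).deriv,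
      poch_succ, poch_succ, Nat.cast_succ, ← add_assoc, mul_div_mul_comm, pow_succ]
    ring

theorem stmt4 (a b x t : ℂ) (hb : ∀ n : ℕ, b ≠ -(n : ℂ)) :
    HasSum (fun ℓ : ℕ => poch (b - a) ℓ / ((ℓ.factorial : ℂ) * poch b ℓ) * oneF1 a (b + ℓ) x * (-t) ^ ℓ)
      (Complex.exp (-t) * oneF1 a b (x + t)) := by
  have hdiff : Differentiable ℂ fun y => exp (-y) * oneF1 a b y :=
    fun y => (hasDerivAt_exp_neg_mul_oneF1 hb a y).differentiableAt
  have h := (hasSum_taylorSeries_of_entire hdiff x (x + t)).mul_left (exp x)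
  have hexp : exp x * exp (-x) = 1 := by rw [← exp_add, add_neg_cancel, exp_zero]
  convert! h using 1
  · funext n
    simp only [iteratedDeriv_exp_neg_mul_oneF1 hb, smul_eq_mul, add_sub_cancel_left]
    rw [neg_pow t n, div_mul_eq_div_div_swap, div_eq_mul_inv _ (n.factorial : ℂ)]
    linear_combination (-(n.factorial : ℂ)⁻¹ * t ^ n * (-1) ^ n * (poch (b - a) n / poch b n) *
      oneF1 a (b + n) x) * hexp
  · rw [← mul_assoc, ← exp_add]
    ring_nf
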